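/- Let K ≥ 1 and let A be a nonempty subset of F_2^n satisfying |A + A| ≤ K·|A|. Then for every real ε > 0, every positive integer t, and every set B ⊆ F_2^n there exists a set X ⊆ F_2^n with the following properties: (1) X is contained in an affine shift of A, i.e. there exists c ∈ F_2^n with X ⊆ c + A; (2) |X| ≥ |A|/(2·K^{t−1}); (3) for every positive integer ℓ, all x₁, …, x_ℓ ∈ X, and every nonempty subset S ⊆ F_2^n, Pr_{y∈S}[ ρ_{A→B}(y) − ρ_{A→B}(y + x₁ + ⋯ + x_ℓ) ≤ 2εℓ·√(ρ_{A→B}(y)) ] ≥ 1 − 8ℓ·(|A+B|/|S|)·exp(−ε²t/4). -/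

import Mathlib

open scoped Classical Pointwise

/-- The measure of additive containment: `ρ_{A→B}(y) = |{a ∈ A : y + a ∈ B}| / |A|`. -/
noncomputable def rhoMeas {n : ℕ} (A B : Finset (Fin n → ZMod 2)) (y : Fin n → ZMod 2) : ℝ :=
  ((A.filter fun a => y + a ∈ B).card : ℝ) / A.card

/-- `Pr_{y ∈ S}[P y] = |{y ∈ S : P y}| / |S|`. -/
noncomputable def prOver {n : ℕ} (S : Finset (Fin n → ZMod 2))
    (P : (Fin n → ZMod 2) → Prop) : ℝ :=
  ((S.filter fun y => P y).card : ℝ) / S.card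

/-!
Estimate `ρ_{A→B}` by random sampling, with a multiplicative error: for `t` independent uniform
elements of `A`, a Chernoff bound shows that the fraction `ν` of those `a` with `y + a ∈ B` agrees
with `μ = ρ_{A→B}(y)` up to `ε √μ` from below and `ε √ν` from above, except with probability
`2 exp (-ε² t / 4)`. By Markov, half of all samples in `A ^ t` are good: they fail at few `y`.
Sorting the good samples by their `t - 1` differences `a i - a 0`, which lie in `A - A`, some class
contains at least `|A| / (2 K ^ (t - 1))` of them, and its members are translates `x + a` of one
sample `a`. Since the sample `x + a` at `y` gives the same estimate as `a` at `y + x`, each such `x`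
is an almost period of `ρ_{A→B}`, and the exceptional sets add up when almost periods are summed.
The argument works in every commutative group, with `A - A` and `B - A` for the sumsets.
-/

section

open Finset Fintype Real

section Proportion

variable {α : Type*} {s : Finset α} {p q : α → Prop} [DecidablePred p] [DecidablePred q]

/-- The probability that a uniformly random element of `s` satisfies `p`, with value `0` when `s`
is empty. The containment measure `ρ_{A→B}`, its empirical version on a sample, and `Pr_{y ∈ S}`
are all instances. -/
noncomputable def proportion (s : Finset α) (p : α → Prop) [DecidablePred p] : ℝ :=
  #{a ∈ s | p a} / #s

lemma proportion_nonneg : 0 ≤ proportion s p := by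
  unfold proportion; positivity

lemma proportion_le_one : proportion s p ≤ 1 :=
  div_le_one_of_le₀ (mod_cast card_filter_le s p) (Nat.cast_nonneg _)

lemma card_mul_proportion : #s * proportion s p = #{a ∈ s | p a} := by
  rcases s.eq_empty_or_nonempty with rfl | hs
  · simp
  · exact mul_div_cancel₀ _ (by simpa using hs.ne_empty)

lemma proportion_mono (h : ∀ a ∈ s, p a → q a) : proportion s p ≤ proportion s q := by
  unfold proportion
  gcongr 1
  exact_mod_cast card_le_card (monotone_filter_right s h)

lemma proportion_eq_zero (h : ∀ a ∈ s, ¬ p a) : proportion s p = 0 := by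
  simp [proportion, filter_false_of_mem h]

lemma proportion_or_le : proportion s (fun a => p a ∨ q a) ≤ proportion s p + proportion s q := by
  classical
  unfold proportion
  rw [← add_div, filter_or]
  gcongr
  exact_mod_cast card_union_le _ _

end Proportion

section Markov

variable {α : Type*} {s : Finset α} {f : α → ℝ}

lemma card_filter_mul_le_sum (hf : ∀ a ∈ s, 0 ≤ f a) (c : ℝ) :
    #{a ∈ s | c ≤ f a} * c ≤ ∑ a ∈ s, f a :=
  calc #{a ∈ s | c ≤ f a} * c ≤ ∑ a ∈ s with c ≤ f a, f a := by
        rw [← nsmul_eq_mul]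
        exact card_nsmul_le_sum _ _ _ fun a ha => (mem_filter.1 ha).2
    _ ≤ ∑ a ∈ s, f a := sum_le_sum_of_subset_of_nonneg (filter_subset _ _) fun a ha _ => hf a ha

lemma half_card_le_card_filter_le_two_mul (hf : ∀ a ∈ s, 0 ≤ f a) {c : ℝ} (hc : 0 ≤ c)
    (hsum : ∑ a ∈ s, f a ≤ #s * c) : (#s : ℝ) / 2 ≤ #{a ∈ s | f a ≤ 2 * c} := by
  have hsplit : (#{a ∈ s | f a ≤ 2 * c} + #{a ∈ s | ¬ f a ≤ 2 * c} : ℝ) = #s :=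
    mod_cast card_filter_add_card_filter_not _
  by_contra! hlt
  have hne : {a ∈ s | ¬ f a ≤ 2 * c}.Nonempty := by
    rw [← card_pos, ← Nat.cast_pos (α := ℝ)]
    linarith [(Nat.cast_nonneg #{a ∈ s | f a ≤ 2 * c} : (0 : ℝ) ≤ _)]
  have hlarge : #{a ∈ s | ¬ f a ≤ 2 * c} * (2 * c) < ∑ a ∈ s, f a :=
    calc #{a ∈ s | ¬ f a ≤ 2 * c} * (2 * c) = ∑ a ∈ s with ¬ f a ≤ 2 * c, 2 * c := by simp
      _ < ∑ a ∈ s with ¬ f a ≤ 2 * c, f a :=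
        sum_lt_sum_of_nonempty hne fun a ha => not_le.1 (mem_filter.1 ha).2
      _ ≤ ∑ a ∈ s, f a :=
        sum_le_sum_of_subset_of_nonneg (filter_subset _ _) fun a ha _ => hf a ha
  nlinarith

end Markov

section Chernoff

variable {α ι : Type*} [Fintype ι] [DecidableEq ι] {A : Finset α} {p : α → Prop} [DecidablePred p]

lemma sum_piFinset_exp_mul_card (s : ℝ) :
    ∑ a ∈ piFinset fun _ : ι => A, exp (s * #{i | p (a i)}) =
      (#A * (1 + proportion A p * (exp s - 1))) ^ card ι := by
  have hprod (a : ι → α) :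
      exp (s * #{i | p (a i)}) = ∏ i, if p (a i) then exp s else 1 := by
    rw [prod_ite, prod_const, prod_const_one, mul_one, ← exp_nat_mul, mul_comm]
  have hsum : ∑ b ∈ A, (if p b then exp s else 1) = #A * (1 + proportion A p * (exp s - 1)) := by
    have hsplit : (#{b ∈ A | p b} + #{b ∈ A | ¬ p b} : ℝ) = #A :=
      mod_cast card_filter_add_card_filter_not _
    rw [sum_ite, sum_const, sum_const, nsmul_eq_mul, nsmul_eq_mul, mul_add, ← mul_assoc,
      card_mul_proportion]
    linarith
  simp_rw [hprod]
  rw [sum_prod_piFinset A fun _ b => if p b then exp s else 1, prod_const, hsum, card_univ]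

lemma sum_piFinset_exp_mul_card_le (s : ℝ) :
    ∑ a ∈ piFinset fun _ : ι => A, exp (s * #{i | p (a i)}) ≤
      #(piFinset fun _ : ι => A) * exp (card ι * (proportion A p * (exp s - 1))) := by
  have hbase : 0 ≤ 1 + proportion A p * (exp s - 1) := by
    nlinarith [exp_pos s, proportion_nonneg (s := A) (p := p), proportion_le_one (s := A) (p := p)]
  rw [sum_piFinset_exp_mul_card, mul_pow, exp_nat_mul, card_piFinset, prod_const, card_univ,
    Nat.cast_pow]
  gcongr
  rw [add_comm]
  exact add_one_le_exp _

lemma proportion_piFinset_mul_le_mul_proportion_le {s : ℝ} (hs : |s| ≤ 1) (c : ℝ) :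
    proportion (piFinset fun _ : ι => A) (fun a => s * c ≤ s * proportion univ fun i => p (a i)) ≤
      exp (card ι * (proportion A p * (s + s ^ 2) - s * c)) := by
  have hexp : exp s - 1 ≤ s + s ^ 2 := by
    linarith [(abs_le.1 (abs_exp_sub_one_sub_id_le hs)).2]
  have hevent : ∀ a ∈ piFinset fun _ : ι => A,
      s * c ≤ s * proportion univ (fun i => p (a i)) →
      exp (card ι * (s * c)) ≤ exp (s * #{i | p (a i)}) := by
    intro a _ ha
    rw [← card_mul_proportion, card_univ, mul_left_comm s]
    gcongr
  have hmarkov :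
      #{a ∈ piFinset fun _ : ι => A | s * c ≤ s * proportion univ fun i => p (a i)} *
        exp (card ι * (s * c)) ≤
      #(piFinset fun _ : ι => A) * exp (card ι * (proportion A p * (exp s - 1))) :=
    calc _ ≤ #{a ∈ piFinset fun _ : ι => A | exp (card ι * (s * c)) ≤ exp (s * #{i | p (a i)})} *
          exp (card ι * (s * c)) := by
          gcongr ?_ * _
          exact_mod_cast card_le_card (monotone_filter_right _ hevent)
      _ ≤ ∑ a ∈ piFinset fun _ : ι => A, exp (s * #{i | p (a i)}) :=
        card_filter_mul_le_sum (fun _ _ => exp_nonneg _) _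
      _ ≤ _ := sum_piFinset_exp_mul_card_le s
  rw [← le_div_iff₀ (exp_pos _), mul_div_assoc, ← exp_sub, ← mul_sub] at hmarkov
  refine div_le_of_le_mul₀ (Nat.cast_nonneg _) (exp_nonneg _) (hmarkov.trans ?_)
  rw [mul_comm]
  gcongr
  exact proportion_nonneg

/-- Two nonnegative reals `μ` and `ν` agree up to `ε` times the square root of the larger one. -/
def IsSqrtClose (ε μ ν : ℝ) : Prop :=
  μ - ν ≤ ε * √μ ∧ ν - μ ≤ ε * √ν

variable {ε : ℝ}

lemma proportion_piFinset_lower_deviation_le (hε : 0 < ε) :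
    proportion (piFinset fun _ : ι => A) (fun a =>
        ε * √(proportion A p) < proportion A p - proportion univ fun i => p (a i)) ≤
      exp (-(ε ^ 2 * card ι) / 4) := by
  set u := √(proportion A p)
  have hsq : u ^ 2 = proportion A p := sq_sqrt proportion_nonneg
  have hu0 : 0 ≤ u := sqrt_nonneg _
  rcases le_or_gt u ε with hle | hlt
  · rw [proportion_eq_zero]
    · positivity
    · intro a _
      have hν : 0 ≤ proportion univ fun i => p (a i) := proportion_nonneg
      nlinarith
  · have hupos : 0 < u := hε.trans hlt
    -- `s = -ε / (2u)` minimises the Chernoff exponent `u² (s + s²) - s (u² - ε u)`.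
    have hs : |-(ε / (2 * u))| ≤ 1 := by
      rw [abs_neg, abs_of_pos (by positivity), div_le_one (by positivity)]
      linarith
    refine (proportion_mono (q := fun a : ι → α => -(ε / (2 * u)) * (u ^ 2 - ε * u) ≤
      -(ε / (2 * u)) * proportion univ fun i => p (a i)) fun a _ ha => ?_).trans
      ((proportion_piFinset_mul_le_mul_proportion_le hs _).trans_eq ?_)
    · refine mul_le_mul_of_nonpos_left ?_ (neg_nonpos.2 (by positivity))
      linarith
    · rw [← hsq]
      congr 1
      field_simp
      ring

lemma proportion_piFinset_upper_deviation_le (hε : 0 < ε) :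
    proportion (piFinset fun _ : ι => A) (fun a =>
        ε * √(proportion univ fun i => p (a i)) <
          (proportion univ fun i => p (a i)) - proportion A p) ≤
      exp (-(ε ^ 2 * card ι) / 4) := by
  have hμ : 0 ≤ proportion A p := proportion_nonneg
  -- `u²` is the value `ν` at which `ν - ε √ν` equals the true proportion.
  obtain ⟨u, hu, hεu⟩ : ∃ u : ℝ, u ^ 2 - ε * u = proportion A p ∧ ε ≤ u := by
    have hdisc := sq_sqrt (show 0 ≤ ε ^ 2 + 4 * proportion A p by positivity)
    have hle : ε ≤ √(ε ^ 2 + 4 * proportion A p) := le_sqrt_of_sq_le (by linarith)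
    exact ⟨(ε + √(ε ^ 2 + 4 * proportion A p)) / 2, by nlinarith, by linarith⟩
  have hupos : 0 < u := hε.trans_le hεu
  have hs : |ε / (2 * u)| ≤ 1 := by
    rw [abs_of_pos (by positivity), div_le_one (by positivity)]
    linarith
  have hlarge {ν : ℝ} (hν : 0 ≤ ν) (hlt : ε * √ν < ν - proportion A p) : u ^ 2 ≤ ν := by
    have hsq := sq_sqrt hν
    have hsqrt := sqrt_nonneg ν
    by_contra! hνu
    have huv : √ν < u := (sqrt_lt_sqrt hν hνu).trans_eq (sqrt_sq hupos.le)
    nlinarith [huv]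
  have hexponent : (u ^ 2 - ε * u) * (ε / (2 * u) + (ε / (2 * u)) ^ 2) - ε / (2 * u) * u ^ 2 =
      -ε ^ 2 / 4 - ε ^ 3 / (4 * u) := by
    field_simp
    ring
  refine (proportion_mono (q := fun a : ι → α => ε / (2 * u) * u ^ 2 ≤
    ε / (2 * u) * proportion univ fun i => p (a i)) fun a _ ha => ?_).trans
    ((proportion_piFinset_mul_le_mul_proportion_le hs _).trans ?_)
  · gcongr
    exact hlarge proportion_nonneg ha
  · rw [← hu, hexponent, exp_le_exp]
    have : 0 ≤ card ι * (ε ^ 3 / (4 * u)) := by positivity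
    linarith

lemma proportion_piFinset_not_isSqrtClose_le (hε : 0 < ε) :
    proportion (piFinset fun _ : ι => A)
        (fun a => ¬ IsSqrtClose ε (proportion A p) (proportion univ fun i => p (a i))) ≤
      2 * exp (-(ε ^ 2 * card ι) / 4) := by
  simp only [IsSqrtClose, not_and_or, not_le]
  rw [two_mul]
  exact proportion_or_le.trans (add_le_add (proportion_piFinset_lower_deviation_le hε)
    (proportion_piFinset_upper_deviation_le hε))

end Chernoff

section AlmostPeriod

-- `t ↦ t - ε √t` is increasing as soon as it is nonnegative.
lemma sub_mul_sqrt_le_max {p r ε : ℝ} (hp : 0 ≤ p) (hpr : p ≤ r) :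
    p - ε * √p ≤ max 0 (r - ε * √r) := by
  have hp2 := sq_sqrt hp
  have hr2 := sq_sqrt (hp.trans hpr)
  have hp0 := sqrt_nonneg p
  have hle := sqrt_le_sqrt hpr
  rcases le_total √p ε with h | h
  · exact le_max_of_le_left (by nlinarith)
  · exact le_max_of_le_right (by nlinarith)

lemma sub_le_add_mul_sqrt {p q r δ ε : ℝ} (hδ : 0 ≤ δ) (hε : 0 ≤ ε) (hp : 0 ≤ p) (hq : 0 ≤ q)
    (hpr : p - r ≤ δ * √p) (hrq : r - q ≤ ε * √r) : p - q ≤ (δ + ε) * √p := by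
  rw [add_mul]
  rcases le_total p r with h | h
  · have hle : p - ε * √p ≤ q := (sub_mul_sqrt_le_max hp h).trans (max_le hq (by linarith))
    have : 0 ≤ δ * √p := by positivity
    linarith
  · have : ε * √r ≤ ε * √p := by gcongr
    linarith

variable {G : Type*} [AddCommGroup G] {ρ : G → ℝ} {δ δ' M M' : ℝ} {x x' : G}

/-- `x` is a one-sided almost period of `ρ`: away from at most `M` points, translating by `x`
decreases `ρ` by at most `δ √ρ`. -/
def IsAlmostPeriod (ρ : G → ℝ) (δ M : ℝ) (x : G) : Prop :=
  ∃ Z : Finset G, #Z ≤ M ∧ ∀ y ∉ Z, ρ y - ρ (y + x) ≤ δ * √(ρ y)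

lemma isAlmostPeriod_zero : IsAlmostPeriod ρ 0 0 0 :=
  ⟨∅, by simp, by simp⟩

lemma IsAlmostPeriod.add (hρ : ∀ y, 0 ≤ ρ y) (hδ : 0 ≤ δ) (hδ' : 0 ≤ δ')
    (hx : IsAlmostPeriod ρ δ M x) (hx' : IsAlmostPeriod ρ δ' M' x') :
    IsAlmostPeriod ρ (δ + δ') (M + M') (x + x') := by
  classical
  obtain ⟨Z, hZ, hZρ⟩ := hx
  obtain ⟨Z', hZ', hZρ'⟩ := hx'
  refine ⟨Z ∪ Z'.image (· - x), ?_, fun y hy => ?_⟩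
  · have hcard : #(Z ∪ Z'.image (· - x)) ≤ #Z + #Z' :=
      (card_union_le _ _).trans (Nat.add_le_add_left card_image_le _)
    calc (#(Z ∪ Z'.image (· - x)) : ℝ) ≤ #Z + #Z' := mod_cast hcard
      _ ≤ M + M' := add_le_add hZ hZ'
  · rw [notMem_union] at hy
    have hy' : y + x ∉ Z' := fun h => hy.2 (mem_image.2 ⟨y + x, h, add_sub_cancel_right y x⟩)
    rw [← add_assoc]
    exact sub_le_add_mul_sqrt hδ hδ' (hρ y) (hρ _) (hZρ y hy.1) (hZρ' _ hy')

lemma IsAlmostPeriod.sum {κ : Type*} {s : Finset κ} {x : κ → G} (hρ : ∀ y, 0 ≤ ρ y)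
    (hδ : 0 ≤ δ) (hx : ∀ i ∈ s, IsAlmostPeriod ρ δ M (x i)) :
    IsAlmostPeriod ρ (#s * δ) (#s * M) (∑ i ∈ s, x i) := by
  induction s using Finset.cons_induction with
  | empty => simpa using isAlmostPeriod_zero
  | cons i s hi ih =>
    rw [forall_mem_cons] at hx
    rw [sum_cons, card_cons, Nat.cast_succ, add_one_mul, add_one_mul, add_comm _ δ, add_comm _ M]
    exact hx.1.add hρ hδ (by positivity) (ih hx.2)

lemma IsAlmostPeriod.one_sub_le_proportion (hx : IsAlmostPeriod ρ δ M x) {S : Finset G}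
    (hS : S.Nonempty) :
    1 - M / #S ≤ proportion S fun y => ρ y - ρ (y + x) ≤ δ * √(ρ y) := by
  classical
  obtain ⟨Z, hZ, hZρ⟩ := hx
  have hS0 : (0 : ℝ) < #S := mod_cast hS.card_pos
  have hsub : S \ Z ⊆ {y ∈ S | ρ y - ρ (y + x) ≤ δ * √(ρ y)} := fun y hy =>
    mem_filter.2 ⟨(mem_sdiff.1 hy).1, hZρ y (mem_sdiff.1 hy).2⟩
  have hcard : (#S : ℝ) ≤ #{y ∈ S | ρ y - ρ (y + x) ≤ δ * √(ρ y)} + #Z :=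
    mod_cast card_le_card_sdiff_add_card.trans (Nat.add_le_add_right (card_le_card hsub) _)
  rw [proportion, one_sub_div hS0.ne']
  gcongr
  linarith

end AlmostPeriod

section Samples

variable {G ι : Type*} [AddCommGroup G] [DecidableEq G] [Fintype ι]
  {A B : Finset G} {ε : ℝ} {a : ι → G} {x y : G}

/-- The containment measure `ρ_{A→B}` in an arbitrary commutative group. -/
noncomputable def containment (A B : Finset G) (y : G) : ℝ :=
  proportion A fun a => y + a ∈ B

/-- The empirical estimate of `ρ_{A→B} y` from a sample `a` of elements of `A`. -/
noncomputable def sampleContainment (a : ι → G) (B : Finset G) (y : G) : ℝ :=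
  proportion univ fun i => y + a i ∈ B

/-- The points where the empirical estimate given by the sample `a` misses `ρ_{A→B}`. Only points
of `B - A` are listed, since for a sample from `A` both quantities vanish elsewhere. -/
noncomputable def badPoints (A B : Finset G) (ε : ℝ) (a : ι → G) : Finset G :=
  {y ∈ B - A | ¬ IsSqrtClose ε (containment A B y) (sampleContainment a B y)}

variable (ι A B ε) in
/-- The samples from `A` whose number of bad points is at most twice the upper bound on its mean;
by Markov's inequality they make up at least half of all samples. -/
noncomputable def goodSamples [DecidableEq ι] : Finset (ι → G) :=
  {a ∈ piFinset fun _ : ι => A |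
    (#(badPoints A B ε a) : ℝ) ≤ 2 * (#(B - A) * (2 * exp (-(ε ^ 2 * card ι) / 4)))}

lemma containment_nonneg : 0 ≤ containment A B y :=
  proportion_nonneg

lemma sampleContainment_add_left :
    sampleContainment (fun i => x + a i) B y = sampleContainment a B (y + x) := by
  simp only [sampleContainment, add_assoc]

lemma containment_eq_zero (hy : y ∉ B - A) : containment A B y = 0 :=
  proportion_eq_zero fun b hb h => hy (mem_sub.2 ⟨y + b, h, b, hb, add_sub_cancel_right y b⟩)

lemma sampleContainment_eq_zero (ha : ∀ i, a i ∈ A) (hy : y ∉ B - A) :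
    sampleContainment a B y = 0 :=
  proportion_eq_zero fun i _ h =>
    hy (mem_sub.2 ⟨y + a i, h, a i, ha i, add_sub_cancel_right y (a i)⟩)

lemma isSqrtClose_of_notMem_badPoints (ha : ∀ i, a i ∈ A) (hy : y ∉ badPoints A B ε a) :
    IsSqrtClose ε (containment A B y) (sampleContainment a B y) := by
  by_cases hsupp : y ∈ B - A
  · by_contra h
    exact hy (mem_filter.2 ⟨hsupp, h⟩)
  · simp [IsSqrtClose, containment_eq_zero hsupp, sampleContainment_eq_zero ha hsupp]

variable [DecidableEq ι]

lemma sum_card_badPoints_le (hε : 0 < ε) :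
    (∑ a ∈ piFinset fun _ : ι => A, #(badPoints A B ε a) : ℝ) ≤
      #(piFinset fun _ : ι => A) * (#(B - A) * (2 * exp (-(ε ^ 2 * card ι) / 4))) := by
  have hpoint (y : G) :
      (#{a ∈ piFinset fun _ : ι => A |
        ¬ IsSqrtClose ε (containment A B y) (sampleContainment a B y)} : ℝ) ≤
      #(piFinset fun _ : ι => A) * (2 * exp (-(ε ^ 2 * card ι) / 4)) := by
    rw [← card_mul_proportion]
    gcongr
    exact proportion_piFinset_not_isSqrtClose_le hε
  calc (∑ a ∈ piFinset fun _ : ι => A, #(badPoints A B ε a) : ℝ)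
      = ∑ y ∈ B - A, (#{a ∈ piFinset fun _ : ι => A |
          ¬ IsSqrtClose ε (containment A B y) (sampleContainment a B y)} : ℝ) :=
        mod_cast sum_card_bipartiteAbove_eq_sum_card_bipartiteBelow _
    _ ≤ ∑ _y ∈ B - A, #(piFinset fun _ : ι => A) * (2 * exp (-(ε ^ 2 * card ι) / 4)) :=
        sum_le_sum fun y _ => hpoint y
    _ = _ := by rw [sum_const, nsmul_eq_mul, mul_left_comm]

lemma half_card_piFinset_le_card_goodSamples (hε : 0 < ε) :
    (#(piFinset fun _ : ι => A) : ℝ) / 2 ≤ #(goodSamples ι A B ε) :=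
  half_card_le_card_filter_le_two_mul (fun _ _ => Nat.cast_nonneg _) (by positivity)
    (sum_card_badPoints_le hε)

lemma isAlmostPeriod_containment (hε : 0 ≤ ε) (ha : a ∈ goodSamples ι A B ε)
    (hxa : (fun i => x + a i) ∈ goodSamples ι A B ε) :
    IsAlmostPeriod (containment A B) (2 * ε)
      (8 * #(B - A) * exp (-(ε ^ 2 * card ι) / 4)) x := by
  obtain ⟨haA, hcard⟩ := mem_filter.1 ha
  obtain ⟨hxaA, hxcard⟩ := mem_filter.1 hxa
  -- The sample `x + a` estimates `ρ y` by the same number as the sample `a` estimates `ρ (y + x)`.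
  refine ⟨badPoints A B ε (fun i => x + a i) ∪ (badPoints A B ε a).image (· - x), ?_,
    fun y hy => ?_⟩
  · have hunion : (#(badPoints A B ε (fun i => x + a i) ∪ (badPoints A B ε a).image (· - x)) : ℝ) ≤
        #(badPoints A B ε fun i => x + a i) + #(badPoints A B ε a) :=
      mod_cast (card_union_le _ _).trans (Nat.add_le_add_left card_image_le _)
    linarith
  · rw [notMem_union] at hy
    have hy' : y + x ∉ badPoints A B ε a := fun h =>
      hy.2 (mem_image.2 ⟨y + x, h, add_sub_cancel_right y x⟩)
    have hlower := (isSqrtClose_of_notMem_badPoints (mem_piFinset.1 hxaA) hy.1).1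
    have hupper := (isSqrtClose_of_notMem_badPoints (mem_piFinset.1 haA) hy').2
    rw [sampleContainment_add_left] at hlower
    rw [two_mul]
    exact sub_le_add_mul_sqrt hε hε containment_nonneg containment_nonneg hlower hupper

end Samples

section Translates

variable {G ι : Type*} [AddCommGroup G] [DecidableEq G] [Fintype ι] [DecidableEq ι]
  {A : Finset G} {F : Finset (ι → G)}

lemma exists_card_le_mul_card_translates (hF : F.Nonempty) (hFA : F ⊆ piFinset fun _ => A)
    (i₀ : ι) :
    ∃ a ∈ F, #F ≤ #(A - A) ^ (card ι - 1) *
      #{x ∈ A.image fun b => -a i₀ + b | (fun i => x + a i) ∈ F} := by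
  let differences (a : ι → G) (i : {i // i ≠ i₀}) : G := a i - a i₀
  have hmem {a : ι → G} (ha : a ∈ F) (i : ι) : a i ∈ A := mem_piFinset.1 (hFA ha) i
  obtain ⟨a, haF, hmax⟩ :=
    exists_max_image F (fun a => #{b ∈ F | differences b = differences a}) hF
  refine ⟨a, haF, ?_⟩
  have himage : #(F.image differences) ≤ #(A - A) ^ (card ι - 1) := by
    have hmaps : F.image differences ⊆ piFinset fun _ => A - A := image_subset_iff.2 fun b hb =>
      mem_piFinset.2 fun i => sub_mem_sub (hmem hb i) (hmem hb i₀)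
    simpa using card_le_card hmaps
  have htranslate {b : ι → G} (hb : differences b = differences a) :
      b = fun i => -a i₀ + b i₀ + a i := by
    funext i
    by_cases hi : i = i₀
    · subst hi; abel
    · have := congrFun hb ⟨i, hi⟩
      simp only [differences] at this
      rw [← sub_add_cancel (b i) (b i₀), this]
      abel
  calc #F ≤ #{b ∈ F | differences b = differences a} * #(F.image differences) :=
        card_le_mul_card_image F _ (forall_mem_image.2 hmax)
    _ ≤ #{x ∈ A.image fun b => -a i₀ + b | (fun i => x + a i) ∈ F} *
        #(A - A) ^ (card ι - 1) := by
      gcongr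
      refine card_le_card_of_injOn (fun b => -a i₀ + b i₀) (fun b hb => ?_) fun b hb c hc hbc => ?_
      · obtain ⟨hbF, hb⟩ := mem_filter.1 hb
        refine mem_filter.2 ⟨mem_image_of_mem _ (hmem hbF i₀), ?_⟩
        rwa [← htranslate hb]
      · rw [htranslate (mem_filter.1 hb).2, htranslate (mem_filter.1 hc).2]
        exact funext fun i => congrArg (· + a i) hbc
    _ = _ := mul_comm _ _

end Translates

section Main

variable {G : Type*} [AddCommGroup G] [DecidableEq G] {A : Finset G} {K ε : ℝ} {t : ℕ}

lemma exists_card_div_le_card_translates (hA : A.Nonempty) (hK : #(A - A) ≤ K * #A) (ht : 0 < t)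
    {F : Finset (Fin t → G)} (hFA : F ⊆ piFinset fun _ => A)
    (hF : (#(piFinset fun _ : Fin t => A) : ℝ) / 2 ≤ #F) :
    ∃ a ∈ F, ∃ c : G, #A / (2 * K ^ (t - 1)) ≤
      (#{x ∈ A.image fun b => c + b | (fun i => x + a i) ∈ F} : ℝ) := by
  have hA0 : (0 : ℝ) < #A := mod_cast hA.card_pos
  have hK0 : 0 < K :=
    pos_of_mul_pos_left (lt_of_lt_of_le (mod_cast (hA.sub hA).card_pos) hK) hA0.le
  have hcard : (#(piFinset fun _ : Fin t => A) : ℝ) = #A ^ (t - 1) * #A := by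
    rw [card_piFinset_const, Nat.cast_pow, ← pow_succ, Nat.sub_add_cancel ht]
  have hFne : F.Nonempty := by
    rw [← card_pos, ← Nat.cast_pos (α := ℝ)]
    exact lt_of_lt_of_le (by rw [hcard]; positivity) hF
  obtain ⟨a, haF, hle⟩ := exists_card_le_mul_card_translates hFne hFA ⟨0, ht⟩
  refine ⟨a, haF, -a ⟨0, ht⟩, ?_⟩
  rw [Fintype.card_fin] at hle
  set X := {x ∈ A.image fun b => -a ⟨0, ht⟩ + b | (fun i => x + a i) ∈ F}
  have hpow : (#A : ℝ) ^ (t - 1) * (#A / 2) ≤ #A ^ (t - 1) * (K ^ (t - 1) * #X) :=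
    calc (#A : ℝ) ^ (t - 1) * (#A / 2) = #(piFinset fun _ : Fin t => A) / 2 := by
          rw [hcard, mul_div_assoc]
      _ ≤ #F := hF
      _ ≤ #(A - A) ^ (t - 1) * #X := mod_cast hle
      _ ≤ (K * #A) ^ (t - 1) * #X := by gcongr
      _ = #A ^ (t - 1) * (K ^ (t - 1) * #X) := by ring
  rw [← div_div, div_le_iff₀' (by positivity)]
  exact le_of_mul_le_mul_left hpow (by positivity)

theorem refined_almost_periodicity_of_sumsets_iterated_general (hA : A.Nonempty)
    (hK : #(A - A) ≤ K * #A) (hε : 0 < ε) (ht : 0 < t) (B : Finset G) :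
    ∃ X : Finset G, (∃ c : G, X ⊆ A.image fun a => c + a) ∧ #A / (2 * K ^ (t - 1)) ≤ (#X : ℝ) ∧
      ∀ (ℓ : ℕ) (x : Fin ℓ → G), (∀ i, x i ∈ X) → ∀ S : Finset G, S.Nonempty →
        1 - 8 * ℓ * (#(B - A) / #S) * exp (-(ε ^ 2 * t) / 4) ≤
          proportion S fun y => containment A B y - containment A B (y + ∑ i, x i) ≤
            2 * ε * ℓ * √(containment A B y) := by
  obtain ⟨a, ha, c, hX⟩ := exists_card_div_le_card_translates hA hK ht (filter_subset _ _)
    (half_card_piFinset_le_card_goodSamples (B := B) hε)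
  refine ⟨_, ⟨c, filter_subset _ _⟩, hX, fun ℓ x hx S hS => ?_⟩
  have hperiod := IsAlmostPeriod.sum (s := univ) (fun _ => containment_nonneg) (by positivity)
    fun i _ => isAlmostPeriod_containment hε.le ha (mem_filter.1 (hx i)).2
  rw [card_univ, Fintype.card_fin, Fintype.card_fin] at hperiod
  convert hperiod.one_sub_le_proportion hS using 2
  · ring
  · simp only [mul_comm (ℓ : ℝ)]

lemma finset_sub_eq_add_swap [Module (ZMod 2) G] (A B : Finset G) : A - B = B + A := by
  rw [add_comm]
  ext
  simp only [mem_sub, mem_add, ZModModule.sub_eq_add]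

end Main

variable {n : ℕ} {A B S : Finset (Fin n → ZMod 2)} {P : (Fin n → ZMod 2) → Prop}

lemma rhoMeas_eq_containment : rhoMeas A B = containment A B :=
  rfl

lemma prOver_eq_proportion [DecidablePred P] : prOver S P = proportion S P := by
  unfold prOver proportion
  congr!

end

theorem refined_almost_periodicity_of_sumsets_iterated {n : ℕ} (K : ℝ) (hK : 1 ≤ K)
    (A : Finset (Fin n → ZMod 2)) (hA : A.Nonempty)
    (hdoub : ((A + A).card : ℝ) ≤ K * A.card)
    (ε : ℝ) (hε : 0 < ε) (t : ℕ) (ht : 0 < t) (B : Finset (Fin n → ZMod 2)) :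
    ∃ X : Finset (Fin n → ZMod 2),
      (∃ c : Fin n → ZMod 2, X ⊆ A.image (fun a => c + a)) ∧
      (A.card : ℝ) / (2 * K ^ (t - 1)) ≤ X.card ∧
      ∀ ℓ : ℕ, 0 < ℓ → ∀ x : Fin ℓ → (Fin n → ZMod 2), (∀ i, x i ∈ X) →
        ∀ S : Finset (Fin n → ZMod 2), S.Nonempty →
          1 - 8 * ℓ * (((A + B).card : ℝ) / S.card) * Real.exp (-(ε ^ 2 * t) / 4) ≤
            prOver S (fun y =>
              rhoMeas A B y - rhoMeas A B (y + ∑ i, x i) ≤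
                2 * ε * ℓ * Real.sqrt (rhoMeas A B y)) := by
  simp_rw [← finset_sub_eq_add_swap, rhoMeas_eq_containment, prOver_eq_proportion] at hdoub ⊢
  obtain ⟨X, hXA, hcard, hX⟩ :=
    refined_almost_periodicity_of_sumsets_iterated_general hA hdoub hε ht B
  exact ⟨X, hXA, hcard, fun ℓ _ => hX ℓ⟩
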